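/- Let q be a real number with q > 1 and let m ≥ 1 be an integer. Then the sum, over all integer partitions λ of 2m in which every odd part occurs with even multiplicity, of (1 - q^{-λ'_1}) / ( q^{( Σ_i (λ'_i)^2 + o(λ) )/2} · Π_i (1/q^2; 1/q^2)_{⌊m_i(λ)/2⌋} ) equals (1/(q^m (q+1))) · Σ_{i=1}^{m} (-1)^{i-1} (q^{2i+1} + 1) / ( q^{i(i+1)} (1/q^2; 1/q^2)_{m-i} ). -/

import Mathlib

/-- The q-Pochhammer symbol `(a; Q)_n = ∏_{j=0}^{n-1} (1 - a Q^j)` over the reals. -/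
noncomputable def qPoch (a Q : ℝ) (n : ℕ) : ℝ := ∏ j ∈ Finset.range n, (1 - a * Q ^ j)

/-- `λ'_i`, the size of the `i`-th column of the Young diagram of `λ`, i.e. the number of
parts of `λ` of size at least `i` (equivalently `∑_{j ≥ i} m_j(λ)`). -/
def colLen {n : ℕ} (lam : Nat.Partition n) (i : ℕ) : ℕ :=
  (lam.parts.filter (fun j => i ≤ j)).card

/-- `o(λ)`, the number of odd parts of `λ`. -/
def numOddParts {n : ℕ} (lam : Nat.Partition n) : ℕ :=
  (lam.parts.filter (fun j => Odd j)).card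

/-!
Removing the first column of a Young diagram lowers every part by one, so it turns the condition
that odd parts have even multiplicity into the same condition on even parts, and conversely.
Sorting both kinds of partitions by their number of parts gives mutual recurrences, whose
coefficients depend only on the length of the removed column and on the number of ones lost. The
`q`-Vandermonde identity propagates through them a closed form in Gaussian binomial coefficients.
The remaining sum over the number of parts is evaluated by applying Gauss's `q`-binomial theorem in
both directions.
-/

open Finset
open Finset.Nat (sum_antidiagonal_succ sum_antidiagonal_succ' sum_antidiagonal_eq_sum_range_succ)

section Antidiagonal

variable {M : Type*} [AddCommMonoid M]

lemma sum_antidiagonal_assoc {A : Type*} [AddCommMonoid A] [HasAntidiagonal A]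
    (f : A → A → A → M) (n : A) :
    ∑ p ∈ antidiagonal n, ∑ r ∈ antidiagonal p.1, f r.1 r.2 p.2 =
      ∑ p ∈ antidiagonal n, ∑ r ∈ antidiagonal p.2, f p.1 r.1 r.2 := by
  simp only [sum_sigma']
  refine sum_nbij' (fun ⟨⟨_, l⟩, i, j⟩ ↦ ⟨(i, j + l), (j, l)⟩)
    (fun ⟨⟨i, _⟩, j, l⟩ ↦ ⟨(i + j, l), (i, j)⟩) ?_ ?_ ?_ ?_ ?_ <;>
    grind [HasAntidiagonal.mem_antidiagonal]

lemma sum_antidiagonal_two_mul_add_one (f : ℕ → ℕ → M) (n : ℕ) :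
    ∑ p ∈ antidiagonal (2 * n + 1), f p.1 p.2 =
      ∑ p ∈ antidiagonal n,
        (f (2 * p.1) (2 * p.2 + 1) + f (2 * p.1 + 1) (2 * p.2)) := by
  induction n generalizing f with
  | zero => simp [sum_antidiagonal_succ]
  | succ n ih =>
    rw [show 2 * (n + 1) + 1 = 2 * n + 1 + 1 + 1 by ring, sum_antidiagonal_succ,
      sum_antidiagonal_succ, ih fun i j ↦ f (i + 1 + 1) j, sum_antidiagonal_succ, ← add_assoc]
    rfl

lemma sum_antidiagonal_two_mul_add_two (f : ℕ → ℕ → M) (n : ℕ) :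
    ∑ p ∈ antidiagonal (2 * n + 2), f p.1 p.2 =
      f 0 (2 * n + 2) + ∑ p ∈ antidiagonal n,
        (f (2 * p.1 + 1) (2 * p.2 + 1) + f (2 * p.1 + 2) (2 * p.2)) := by
  rw [sum_antidiagonal_succ, sum_antidiagonal_two_mul_add_one fun i j ↦ f (i + 1) j]

end Antidiagonal

section CommRing

variable {R : Type*} [CommRing R]

/-- The `q`-Pochhammer symbol `(a; x)_n` over an arbitrary commutative ring; over `ℝ` it is
definitionally equal to `qPoch`. -/
def qPochhammer (a x : R) (n : ℕ) : R := ∏ j ∈ range n, (1 - a * x ^ j)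

/-- The Gaussian binomial coefficient with base `x`, defined through its Pascal recurrence
so that it makes sense without any division and vanishes when `n < k`. -/
def gaussBinom (x : R) : ℕ → ℕ → R
  | _, 0 => 1
  | 0, _ + 1 => 0
  | n + 1, k + 1 => gaussBinom x n k + x ^ (k + 1) * gaussBinom x n (k + 1)

@[simp]
lemma qPochhammer_zero (a x : R) : qPochhammer a x 0 = 1 := rfl

lemma qPochhammer_succ (a x : R) (n : ℕ) :
    qPochhammer a x (n + 1) = qPochhammer a x n * (1 - a * x ^ n) :=
  prod_range_succ _ n

lemma qPochhammer_self_succ (x : R) (n : ℕ) :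
    qPochhammer x x (n + 1) = qPochhammer x x n * (1 - x ^ (n + 1)) := by
  rw [qPochhammer_succ, pow_succ']

lemma qPochhammer_succ' (a x : R) (n : ℕ) :
    qPochhammer a x (n + 1) = (1 - a) * qPochhammer (a * x) x n := by
  simp only [qPochhammer, prod_range_succ', pow_succ', mul_assoc, pow_zero, mul_one]
  exact mul_comm _ _

lemma qPochhammer_add (a x : R) (m n : ℕ) :
    qPochhammer a x (m + n) = qPochhammer a x m * qPochhammer (a * x ^ m) x n := by
  simp only [qPochhammer, prod_range_add, pow_add, mul_assoc]

@[simp]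
lemma gaussBinom_zero_right (x : R) (n : ℕ) : gaussBinom x n 0 = 1 := by cases n <;> rfl

@[simp]
lemma gaussBinom_zero_succ (x : R) (k : ℕ) : gaussBinom x 0 (k + 1) = 0 := rfl

lemma gaussBinom_succ_succ (x : R) (n k : ℕ) :
    gaussBinom x (n + 1) (k + 1) = gaussBinom x n k + x ^ (k + 1) * gaussBinom x n (k + 1) :=
  rfl

lemma gaussBinom_eq_zero_of_lt (x : R) {n k : ℕ} (h : n < k) : gaussBinom x n k = 0 := by
  induction n generalizing k with
  | zero => obtain ⟨k, rfl⟩ := Nat.exists_eq_succ_of_ne_zero h.ne'; rfl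
  | succ n ih =>
    obtain ⟨k, rfl⟩ := Nat.exists_eq_succ_of_ne_zero (Nat.ne_zero_of_lt h)
    rw [gaussBinom_succ_succ, ih (by lia), ih (by lia), mul_zero, add_zero]

lemma gaussBinom_self (x : R) (n : ℕ) : gaussBinom x n n = 1 := by
  induction n with
  | zero => rfl
  | succ n ih => rw [gaussBinom_succ_succ, ih, gaussBinom_eq_zero_of_lt x n.lt_succ_self]; ring

lemma gaussBinom_add_mul_qPochhammer (x : R) (i j : ℕ) :
    gaussBinom x (i + j) i * (qPochhammer x x i * qPochhammer x x j) =
      qPochhammer x x (i + j) := by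
  induction i generalizing j with
  | zero => simp
  | succ i ih =>
    induction j with
    | zero => simp [gaussBinom_self]
    | succ j ihj =>
      have h₁ := ih (j + 1)
      rw [show i + (j + 1) = i + 1 + j by ring] at h₁
      rw [← add_assoc, gaussBinom_succ_succ, qPochhammer_self_succ x (i + 1 + j)]
      rw [qPochhammer_self_succ x j] at h₁ ⊢
      rw [qPochhammer_self_succ x i] at ihj ⊢
      linear_combination (1 - x ^ (i + 1)) * h₁ + x ^ (i + 1) * (1 - x ^ (j + 1)) * ihj

lemma qPochhammer_eq_sum_gaussBinom (z x : R) (n : ℕ) :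
    qPochhammer z x n =
      ∑ i ∈ range (n + 1), (-1) ^ i * x ^ i.choose 2 * gaussBinom x n i * z ^ i := by
  induction n generalizing z with
  | zero => simp
  | succ n ih =>
    have key : ∀ i, (-1) ^ (i + 1) * x ^ (i + 1).choose 2 * gaussBinom x (n + 1) (i + 1) *
          z ^ (i + 1) =
        -z * ((-1) ^ i * x ^ i.choose 2 * gaussBinom x n i * (z * x) ^ i) +
          (-1) ^ (i + 1) * x ^ (i + 1).choose 2 * gaussBinom x n (i + 1) * (z * x) ^ (i + 1) := by
      intro i
      rw [gaussBinom_succ_succ, Nat.choose_succ_succ' i 1, Nat.choose_one_right]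
      ring
    have tail : ∑ i ∈ range (n + 1), (-1) ^ (i + 1) * x ^ (i + 1).choose 2 *
        gaussBinom x n (i + 1) * (z * x) ^ (i + 1) = qPochhammer (z * x) x n - 1 := by
      rw [ih, eq_sub_iff_add_eq, sum_range_succ, gaussBinom_eq_zero_of_lt x n.lt_succ_self,
        sum_range_succ' _ n]
      simp
    rw [sum_range_succ']
    simp only [key]
    rw [sum_add_distrib, ← mul_sum, ← ih, tail, qPochhammer_succ']
    simp only [neg_mul, pow_zero, Nat.choose_zero_succ, mul_one, gaussBinom_zero_right]
    ring

lemma gaussBinom_add_eq_sum (x : R) (a b n : ℕ) :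
    gaussBinom x (a + b) n = ∑ p ∈ antidiagonal n,
      x ^ (p.1 * (a - p.2)) * gaussBinom x b p.1 * gaussBinom x a p.2 := by
  induction a generalizing n with
  | zero => cases n <;> simp [sum_antidiagonal_succ']
  | succ a ih =>
    cases n with
    | zero => simp
    | succ n =>
      have key : ∀ p ∈ antidiagonal (n + 1),
          x ^ (n + 1) * (x ^ (p.1 * (a - p.2)) * gaussBinom x b p.1 * gaussBinom x a p.2) =
            x ^ (p.1 * (a + 1 - p.2) + p.2) * gaussBinom x b p.1 * gaussBinom x a p.2 := by
        rintro ⟨i, j⟩ hp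
        rw [HasAntidiagonal.mem_antidiagonal] at hp
        rcases lt_or_ge a j with hj | hj
        · simp [gaussBinom_eq_zero_of_lt x hj]
        · rw [← hp, Nat.sub_add_comm hj]
          ring
      rw [add_right_comm, gaussBinom_succ_succ, ih, ih, mul_sum, sum_congr rfl key,
        sum_antidiagonal_succ', sum_antidiagonal_succ', add_left_comm, ← sum_add_distrib]
      simp only [gaussBinom_succ_succ, gaussBinom_zero_right, Nat.add_sub_add_right, add_zero]
      congr 1
      exact sum_congr rfl fun p _ ↦ by ring

end CommRing

section Field

variable {K : Type*} [Field K] {x : K}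

lemma gaussBinom_add_eq_div (hx : ∀ n, qPochhammer x x n ≠ 0) (i j : ℕ) :
    gaussBinom x (i + j) i =
      qPochhammer x x (i + j) / (qPochhammer x x i * qPochhammer x x j) :=
  eq_div_of_mul_eq (mul_ne_zero (hx i) (hx j)) (gaussBinom_add_mul_qPochhammer x i j)

lemma qPochhammer_pow_succ_div (hx : ∀ n, qPochhammer x x n ≠ 0) (i j : ℕ) :
    qPochhammer (x ^ (i + 1)) x j / qPochhammer x x j = gaussBinom x (i + j) i := by
  rw [gaussBinom_add_eq_div hx, qPochhammer_add, pow_succ', mul_div_mul_left _ _ (hx i)]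

lemma qPochhammer_div_eq_sum (hx : ∀ n, qPochhammer x x n ≠ 0) (z : K) (n : ℕ) :
    qPochhammer z x n / qPochhammer x x n = ∑ p ∈ antidiagonal n,
      (-1) ^ p.1 * x ^ p.1.choose 2 * z ^ p.1 / (qPochhammer x x p.1 * qPochhammer x x p.2) := by
  rw [qPochhammer_eq_sum_gaussBinom, ← sum_antidiagonal_eq_sum_range_succ
    fun i _ ↦ (-1) ^ i * x ^ i.choose 2 * gaussBinom x n i * z ^ i, sum_div]
  refine sum_congr rfl fun p hp ↦ ?_
  rw [← mem_antidiagonal.1 hp, gaussBinom_add_eq_div hx]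
  have := hx (p.1 + p.2)
  field_simp

lemma sum_gaussBinom_div_qPochhammer (hx : ∀ n, qPochhammer x x n ≠ 0) (r b n : ℕ) :
    ∑ p ∈ antidiagonal n, x ^ (p.1 * (p.1 + r)) * gaussBinom x b p.1 /
        qPochhammer x x (p.1 + r) / qPochhammer x x p.2 =
      gaussBinom x (n + r + b) n / qPochhammer x x (n + r) := by
  rw [gaussBinom_add_eq_sum, sum_div]
  refine sum_congr rfl fun p hp ↦ ?_
  obtain rfl := mem_antidiagonal.1 hp
  rw [show p.1 + p.2 + r = p.2 + (p.1 + r) by ring, gaussBinom_add_eq_div hx,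
    Nat.add_sub_cancel_left]
  have := hx (p.2 + (p.1 + r))
  field_simp

lemma add_add_one_choose_two_add_choose_two (i j : ℕ) :
    (i + j + 1).choose 2 + i.choose 2 = i ^ 2 + j.choose 2 + (i + 1) * j := by
  induction j with
  | zero => induction i <;> grind [Nat.choose_succ_succ', Nat.choose_one_right]
  | succ j ih => grind [Nat.choose_succ_succ', Nat.choose_one_right]

lemma neg_one_pow_mul_pow_choose_two_mul {R : Type*} [CommRing R] (x : R) (i j : ℕ) :
    (-1) ^ (i + j) * x ^ (i + j + 1).choose 2 * ((-1) ^ i * x ^ i.choose 2) =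
      x ^ i ^ 2 * ((-1) ^ j * x ^ j.choose 2 * (x ^ (i + 1)) ^ j) := by
  rw [mul_mul_mul_comm, ← pow_add x, add_add_one_choose_two_add_choose_two]
  linear_combination (-1) ^ j * x ^ (i ^ 2 + j.choose 2 + (i + 1) * j) *
    pow_mul_pow_eq_one i (show (-1 : R) * -1 = 1 by norm_num)

/-- Expand `(z; x)_s` by Gauss's theorem and sum over the complementary index, again by Gauss. -/
lemma sum_gaussBinom_eq_sum_qPochhammer (hx : ∀ n, qPochhammer x x n ≠ 0) (z : K) (n : ℕ) :
    ∑ p ∈ antidiagonal n, x ^ p.1 ^ 2 * z ^ p.1 * gaussBinom x n p.1 / qPochhammer x x p.1 =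
      ∑ p ∈ antidiagonal n, (-1) ^ p.1 * x ^ (p.1 + 1).choose 2 * qPochhammer z x p.1 /
        (qPochhammer x x p.1 * qPochhammer x x p.2) := by
  symm
  calc
    _ = ∑ p ∈ antidiagonal n, ∑ r ∈ antidiagonal p.1,
        (-1) ^ (r.1 + r.2) * x ^ (r.1 + r.2 + 1).choose 2 / qPochhammer x x p.2 *
          ((-1) ^ r.1 * x ^ r.1.choose 2 * z ^ r.1 /
            (qPochhammer x x r.1 * qPochhammer x x r.2)) := by
      refine sum_congr rfl fun p _ ↦ ?_
      rw [mul_comm (qPochhammer x x p.1), mul_div_mul_comm, qPochhammer_div_eq_sum hx, mul_sum]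
      refine sum_congr rfl fun r hr ↦ ?_
      rw [mem_antidiagonal.1 hr]
    _ = ∑ p ∈ antidiagonal n, x ^ p.1 ^ 2 * z ^ p.1 / qPochhammer x x p.1 *
        ∑ r ∈ antidiagonal p.2, (-1) ^ r.1 * x ^ r.1.choose 2 * (x ^ (p.1 + 1)) ^ r.1 /
          (qPochhammer x x r.1 * qPochhammer x x r.2) := by
      rw [sum_antidiagonal_assoc fun i j l ↦ (-1) ^ (i + j) * x ^ (i + j + 1).choose 2 /
        qPochhammer x x l * ((-1) ^ i * x ^ i.choose 2 * z ^ i /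
            (qPochhammer x x i * qPochhammer x x j))]
      refine sum_congr rfl fun p _ ↦ ?_
      rw [mul_sum]
      exact sum_congr rfl fun r _ ↦ by
        linear_combination z ^ p.1 /
          (qPochhammer x x p.1 * qPochhammer x x r.1 * qPochhammer x x r.2) *
            neg_one_pow_mul_pow_choose_two_mul x p.1 r.1
    _ = _ := by
      refine sum_congr rfl fun p hp ↦ ?_
      rw [← qPochhammer_div_eq_sum hx, qPochhammer_pow_succ_div hx, mem_antidiagonal.1 hp]
      ring

end Field

section ShiftedProduct

variable {M : Type*} [CommMonoid M]

@[to_additive]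
lemma prod_Icc_add_succ_eq_mul {f : ℕ → M} {n : ℕ} (hf : ∀ i, n < i → f (i + 1) = 1)
    (k : ℕ) : ∏ i ∈ Icc 1 (n + (k + 1)), f i = f 1 * ∏ i ∈ Icc 1 n, f (i + 1) := by
  rw [← add_assoc, ← Ico_add_one_right_eq_Icc, prod_eq_prod_Ico_succ_bot (by lia),
    ← prod_Ico_add' f 1 _ 1, Ico_add_one_right_eq_Icc]
  congr 1
  refine (prod_subset (Icc_subset_Icc_right (Nat.le_add_right n k)) fun i hi hin ↦ hf i ?_).symm
  simp only [mem_Icc] at hi hin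
  lia

end ShiftedProduct

section Partition

variable {n k : ℕ}

lemma colLen_one (μ : n.Partition) : colLen μ 1 = μ.parts.card :=
  congrArg _ (Multiset.filter_eq_self.2 fun _ h ↦ μ.parts_pos h)

lemma colLen_eq_zero_of_lt (μ : n.Partition) {i : ℕ} (hi : n < i) : colLen μ i = 0 := by
  rw [colLen, Multiset.card_eq_zero, Multiset.filter_eq_nil]
  exact fun j hj ↦ ((μ.le_of_mem_parts hj).trans_lt hi).not_ge

lemma count_parts_eq_zero_of_lt (μ : n.Partition) {i : ℕ} (hi : n < i) :
    μ.parts.count i = 0 :=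
  Multiset.count_eq_zero_of_notMem fun h ↦ (μ.le_of_mem_parts h).not_gt hi

lemma count_zero_parts (μ : n.Partition) : μ.parts.count 0 = 0 :=
  Multiset.count_eq_zero_of_notMem fun h ↦ (μ.parts_pos h).ne rfl

lemma card_parts_le (μ : n.Partition) : μ.parts.card ≤ n := by
  simpa [μ.parts_sum] using Multiset.card_nsmul_le_sum (a := 1) fun _ ↦ μ.parts_pos

lemma card_parts_ne_zero (μ : (n + 1).Partition) : μ.parts.card ≠ 0 := fun h ↦ by
  have := μ.parts_sum
  simp [Multiset.card_eq_zero.1 h] at this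

/-- The partition whose diagram is that of `μ` with a further column of length `k` put in front:
every part grows by one and the missing parts are created with size one. -/
def addColumn (μ : n.Partition) (hk : μ.parts.card ≤ k) : (n + k).Partition where
  parts := (μ.parts + .replicate (k - μ.parts.card) 0).map Nat.succ
  parts_pos h := by obtain ⟨i, -, rfl⟩ := Multiset.mem_map.1 h; exact i.succ_pos
  parts_sum := by
    simp [Nat.succ_eq_add_one, Multiset.sum_map_add, μ.parts_sum, add_assoc,
      Nat.add_sub_cancel' hk]

variable (μ : n.Partition) (hk : μ.parts.card ≤ k)

lemma card_parts_addColumn : (addColumn μ hk).parts.card = k := by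
  simp [addColumn, Nat.add_sub_cancel' hk]

lemma count_one_addColumn : (addColumn μ hk).parts.count 1 = k - μ.parts.card := by
  rw [addColumn, Multiset.count_map_eq_count' _ _ Nat.succ_injective 0]
  simp [count_zero_parts]

lemma count_succ_addColumn {i : ℕ} (hi : i ≠ 0) :
    (addColumn μ hk).parts.count (i + 1) = μ.parts.count i := by
  rw [addColumn, Multiset.count_map_eq_count' _ _ Nat.succ_injective i]
  simp [Multiset.count_replicate, hi.symm]

lemma colLen_succ_addColumn {i : ℕ} (hi : i ≠ 0) :
    colLen (addColumn μ hk) (i + 1) = colLen μ i := by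
  have : (Multiset.replicate (k - μ.parts.card) 0).filter (i ≤ ·) = 0 :=
    Multiset.filter_eq_nil.2 fun a ha ↦ by simpa [Multiset.eq_of_mem_replicate ha] using hi
  simp only [colLen, addColumn, Multiset.filter_map, Function.comp_def, Multiset.card_map,
    Nat.succ_eq_add_one, Nat.add_le_add_iff_right, Multiset.filter_add, this, add_zero]

lemma numOddParts_addColumn_add :
    numOddParts (addColumn μ hk) + numOddParts μ = k := by
  have split := congrArg Multiset.card (Multiset.filter_add_not (fun i ↦ Odd i) μ.parts)
  have new : (Multiset.replicate (k - μ.parts.card) 0).filter (fun i ↦ ¬ Odd i) =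
      .replicate (k - μ.parts.card) 0 :=
    Multiset.filter_eq_self.2 fun a ha ↦ by simp [Multiset.eq_of_mem_replicate ha]
  simp only [Multiset.card_add] at split
  simp only [numOddParts, addColumn, Multiset.filter_map, Function.comp_def, Multiset.card_map,
    Nat.succ_eq_add_one, Nat.odd_add_one, Multiset.filter_add, new, Multiset.card_add,
    Multiset.card_replicate]
  lia

lemma addColumn_injective {μ ν : n.Partition} {hμ : μ.parts.card ≤ k} {hν : ν.parts.card ≤ k}
    (h : addColumn μ hμ = addColumn ν hν) : μ = ν := by
  refine Nat.Partition.ext (Multiset.ext.2 fun i ↦ ?_)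
  rcases eq_or_ne i 0 with rfl | hi
  · rw [count_zero_parts, count_zero_parts]
  · rw [← count_succ_addColumn μ hμ hi, h, count_succ_addColumn ν hν hi]

lemma exists_addColumn_eq (lam : (n + k).Partition) (hlam : lam.parts.card = k) :
    ∃ (μ : n.Partition) (hk : μ.parts.card ≤ k), addColumn μ hk = lam := by
  set s : Multiset ℕ := lam.parts.map Nat.pred
  have map_succ : s.map Nat.succ = lam.parts := by
    rw [Multiset.map_map]
    exact (Multiset.map_congr rfl fun i hi ↦ Nat.succ_pred (lam.parts_pos hi).ne').trans
      (Multiset.map_id' _)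
  have card_s : s.card = k := by rw [Multiset.card_map, hlam]
  have sum_s : s.sum = n := by
    have := congrArg Multiset.sum map_succ
    simp only [Nat.succ_eq_add_one, Multiset.sum_map_add, Multiset.map_id', Multiset.map_const',
      Multiset.sum_replicate, lam.parts_sum, card_s, smul_eq_mul, mul_one] at this
    lia
  have zeros : s.filter (· ≠ 0) + .replicate (k - (s.filter (· ≠ 0)).card) 0 = s := by
    have split := Multiset.filter_add_not (· ≠ 0) s
    simp only [not_not, Multiset.filter_eq'] at split
    have card_split := congrArg Multiset.card split
    rw [Multiset.card_add, Multiset.card_replicate, card_s] at card_split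
    rwa [← card_split, Nat.add_sub_cancel_left]
  refine ⟨.ofSums n s sum_s, ?_, Nat.Partition.ext ?_⟩
  · exact (Multiset.card_le_card (Multiset.filter_le _ _)).trans_eq card_s
  · exact (congrArg _ zeros).trans map_succ

lemma sum_card_parts_eq {M : Type*} [AddCommMonoid M] {w : (n + k).Partition → M}
    {v : ℕ → n.Partition → M}
    (h : ∀ (μ : n.Partition) (hk : μ.parts.card ≤ k), w (addColumn μ hk) = v (k - μ.parts.card) μ) :
    ∑ lam with lam.parts.card = k, w lam =
      ∑ p ∈ antidiagonal k, ∑ μ with μ.parts.card = p.1, v p.2 μ := by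
  have removed : ∑ lam with lam.parts.card = k, w lam =
      ∑ μ : n.Partition with μ.parts.card ≤ k, v (k - μ.parts.card) μ := by
    refine (sum_bij (fun μ hμ ↦ addColumn μ (mem_filter.1 hμ).2) ?_ ?_ ?_ ?_).symm
    · exact fun μ hμ ↦ mem_filter.2 ⟨mem_univ _, card_parts_addColumn μ _⟩
    · exact fun _ _ _ _ ↦ addColumn_injective
    · intro lam hlam
      obtain ⟨μ, hk, rfl⟩ := exists_addColumn_eq lam (mem_filter.1 hlam).2
      exact ⟨μ, mem_filter.2 ⟨mem_univ _, hk⟩, rfl⟩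
    · exact fun μ _ ↦ (h μ _).symm
  have card_mem (μ : n.Partition) (hμ : μ ∈ ({μ | μ.parts.card ≤ k} : Finset _)) :
      μ.parts.card ∈ range (k + 1) := mem_range_succ_iff.2 (mem_filter.1 hμ).2
  rw [removed, sum_antidiagonal_eq_sum_range_succ fun i j ↦ ∑ μ with μ.parts.card = i, v j μ,
    ← sum_fiberwise_of_maps_to card_mem]
  refine sum_congr rfl fun i hi ↦ ?_
  rw [filter_filter]
  refine sum_congr (filter_congr fun μ _ ↦ ?_) fun μ hμ ↦ by rw [(mem_filter.1 hμ).2]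
  exact and_iff_right_of_imp fun h ↦ h.trans_le (mem_range_succ_iff.1 hi)

end Partition

section Weight

variable {K : Type*} [Field K] {n k : ℕ}

open Classical in
/-- The summand attached to a partition of symplectic type (every odd part occurs with even
multiplicity), with `t` in the role of `q^{-1/2}`, and zero for all other partitions. -/
noncomputable def symplecticWeight (t x : K) (μ : n.Partition) : K :=
  if ∀ i, Odd i → Even (μ.parts.count i) then
    t ^ (∑ i ∈ Icc 1 n, colLen μ i ^ 2) * t ^ numOddParts μ /
      ∏ i ∈ Icc 1 n, qPochhammer x x (μ.parts.count i / 2)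
  else 0

open Classical in
/-- The analogue of `symplecticWeight` for partitions of orthogonal type (every even part occurs
with even multiplicity); the number of odd parts enters with the opposite sign. -/
noncomputable def orthogonalWeight (t x : K) (μ : n.Partition) : K :=
  if ∀ i, Even i → Even (μ.parts.count i) then
    t ^ (∑ i ∈ Icc 1 n, colLen μ i ^ 2) / t ^ numOddParts μ /
      ∏ i ∈ Icc 1 n, qPochhammer x x (μ.parts.count i / 2)
  else 0

lemma sum_colLen_sq_addColumn (μ : n.Partition) (hk : μ.parts.card ≤ k + 1) :
    ∑ i ∈ Icc 1 (n + (k + 1)), colLen (addColumn μ hk) i ^ 2 =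
      (k + 1) ^ 2 + ∑ i ∈ Icc 1 n, colLen μ i ^ 2 := by
  have pos (i : ℕ) (hi : i ∈ Icc 1 n) : i ≠ 0 := Nat.ne_zero_of_lt (mem_Icc.1 hi).1
  rw [sum_Icc_add_succ_eq_add, colLen_one, card_parts_addColumn]
  · exact congrArg _ (sum_congr rfl fun i hi ↦ by rw [colLen_succ_addColumn μ hk (pos i hi)])
  · intro i hi
    rw [colLen_succ_addColumn μ hk (Nat.ne_zero_of_lt hi), colLen_eq_zero_of_lt μ hi, sq, zero_mul]

lemma prod_qPochhammer_addColumn (x : K) (μ : n.Partition) (hk : μ.parts.card ≤ k + 1) :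
    ∏ i ∈ Icc 1 (n + (k + 1)), qPochhammer x x ((addColumn μ hk).parts.count i / 2) =
      qPochhammer x x ((k + 1 - μ.parts.card) / 2) *
        ∏ i ∈ Icc 1 n, qPochhammer x x (μ.parts.count i / 2) := by
  have pos (i : ℕ) (hi : i ∈ Icc 1 n) : i ≠ 0 := Nat.ne_zero_of_lt (mem_Icc.1 hi).1
  rw [prod_Icc_add_succ_eq_mul, count_one_addColumn]
  · exact congrArg _ (prod_congr rfl fun i hi ↦ by rw [count_succ_addColumn μ hk (pos i hi)])
  · intro i hi
    rw [count_succ_addColumn μ hk (Nat.ne_zero_of_lt hi), count_parts_eq_zero_of_lt μ hi]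
    rfl

lemma forall_odd_even_count_addColumn (μ : n.Partition) (hk : μ.parts.card ≤ k) :
    (∀ i, Odd i → Even ((addColumn μ hk).parts.count i)) ↔
      Even (k - μ.parts.card) ∧ ∀ i, Even i → Even (μ.parts.count i) := by
  constructor
  · refine fun h ↦ ⟨count_one_addColumn μ hk ▸ h 1 odd_one, fun i hi ↦ ?_⟩
    rcases eq_or_ne i 0 with rfl | hi0
    · simp [count_zero_parts]
    · exact count_succ_addColumn μ hk hi0 ▸ h (i + 1) hi.add_one
  · rintro ⟨h₁, h⟩ i ⟨j, rfl⟩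
    rcases eq_or_ne j 0 with rfl | hj
    · rwa [mul_zero, zero_add, count_one_addColumn]
    · rw [count_succ_addColumn μ hk (by lia)]
      exact h _ (even_two_mul j)

lemma forall_even_even_count_addColumn (μ : n.Partition) (hk : μ.parts.card ≤ k) :
    (∀ i, Even i → Even ((addColumn μ hk).parts.count i)) ↔
      ∀ i, Odd i → Even (μ.parts.count i) := by
  constructor
  · exact fun h i hi ↦ count_succ_addColumn μ hk hi.pos.ne' ▸ h (i + 1) hi.add_one
  · rintro h i hi
    rcases i with _ | i
    · simp [count_zero_parts]
    · have hi : Odd i := by simpa [Nat.even_add_one] using hi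
      rw [count_succ_addColumn μ hk hi.pos.ne']
      exact h i hi

lemma pow_numOddParts_addColumn {t : K} (ht : t ≠ 0) (μ : n.Partition)
    (hk : μ.parts.card ≤ k) :
    t ^ numOddParts (addColumn μ hk) = t ^ k / t ^ numOddParts μ := by
  rw [eq_div_iff (pow_ne_zero _ ht), ← pow_add, numOddParts_addColumn_add]

open Classical in
lemma symplecticWeight_addColumn {t : K} (ht : t ≠ 0) (x : K) (μ : n.Partition)
    (hk : μ.parts.card ≤ k + 1) :
    symplecticWeight t x (addColumn μ hk) =
      if Even (k + 1 - μ.parts.card) then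
        t ^ ((k + 1) * (k + 2)) * (orthogonalWeight t x μ /
          qPochhammer x x ((k + 1 - μ.parts.card) / 2))
      else 0 := by
  rw [symplecticWeight, orthogonalWeight, sum_colLen_sq_addColumn, prod_qPochhammer_addColumn]
  simp only [forall_odd_even_count_addColumn, ite_and, ite_div, mul_ite, zero_div, mul_zero]
  refine if_congr Iff.rfl (if_congr Iff.rfl ?_ rfl) rfl
  rw [pow_numOddParts_addColumn ht]
  ring

open Classical in
lemma orthogonalWeight_addColumn {t : K} (ht : t ≠ 0) (x : K) (μ : n.Partition)
    (hk : μ.parts.card ≤ k + 1) :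
    orthogonalWeight t x (addColumn μ hk) =
      t ^ ((k + 1) * k) * (symplecticWeight t x μ /
        qPochhammer x x ((k + 1 - μ.parts.card) / 2)) := by
  rw [symplecticWeight, orthogonalWeight, sum_colLen_sq_addColumn, prod_qPochhammer_addColumn]
  simp only [ite_div, mul_ite, zero_div, mul_zero]
  refine if_congr (forall_even_even_count_addColumn μ hk) ?_ rfl
  rw [pow_numOddParts_addColumn ht]
  have := pow_ne_zero (k + 1) ht
  have := pow_ne_zero (numOddParts μ) ht
  field_simp
  ring

/-- The sum of `symplecticWeight` over the partitions of `n` into exactly `k` parts. -/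
noncomputable def symplecticSum (t x : K) (k n : ℕ) : K :=
  ∑ μ : n.Partition with μ.parts.card = k, symplecticWeight t x μ

/-- The sum of `orthogonalWeight` over the partitions of `n` into exactly `k` parts. -/
noncomputable def orthogonalSum (t x : K) (k n : ℕ) : K :=
  ∑ μ : n.Partition with μ.parts.card = k, orthogonalWeight t x μ

lemma symplecticSum_add {t : K} (ht : t ≠ 0) (x : K) (k n : ℕ) :
    symplecticSum t x (k + 1) (n + (k + 1)) = t ^ ((k + 1) * (k + 2)) *
      ∑ p ∈ antidiagonal (k + 1),
        if Even p.2 then orthogonalSum t x p.1 n / qPochhammer x x (p.2 / 2) else 0 := by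
  rw [symplecticSum, sum_card_parts_eq (v := fun l μ ↦ if Even l then t ^ ((k + 1) * (k + 2)) *
    (orthogonalWeight t x μ / qPochhammer x x (l / 2)) else 0)
    (symplecticWeight_addColumn ht x), mul_sum]
  refine sum_congr rfl fun p _ ↦ ?_
  split_ifs
  · rw [← mul_sum, ← sum_div, orthogonalSum]
  · simp

lemma orthogonalSum_add {t : K} (ht : t ≠ 0) (x : K) (k n : ℕ) :
    orthogonalSum t x (k + 1) (n + (k + 1)) = t ^ ((k + 1) * k) *
      ∑ p ∈ antidiagonal (k + 1), symplecticSum t x p.1 n / qPochhammer x x (p.2 / 2) := by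
  rw [orthogonalSum, sum_card_parts_eq (v := fun l μ ↦ t ^ ((k + 1) * k) *
    (symplecticWeight t x μ / qPochhammer x x (l / 2))) (orthogonalWeight_addColumn ht x), mul_sum]
  refine sum_congr rfl fun p _ ↦ ?_
  rw [← mul_sum, ← sum_div, symplecticSum]

end Weight

section ClosedForm

variable {K : Type*} [Field K] {t x : K}

lemma symplecticSum_eq_zero_of_lt (t x : K) {k n : ℕ} (h : n < k) : symplecticSum t x k n = 0 :=
  sum_eq_zero fun μ hμ ↦ by have := card_parts_le μ; have := (mem_filter.1 hμ).2; lia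

lemma orthogonalSum_eq_zero_of_lt (t x : K) {k n : ℕ} (h : n < k) : orthogonalSum t x k n = 0 :=
  sum_eq_zero fun μ hμ ↦ by have := card_parts_le μ; have := (mem_filter.1 hμ).2; lia

lemma symplecticSum_zero_zero (t x : K) : symplecticSum t x 0 0 = 1 := by
  simp [symplecticSum, symplecticWeight, numOddParts]

lemma orthogonalSum_zero_zero (t x : K) : orthogonalSum t x 0 0 = 1 := by
  simp [orthogonalSum, orthogonalWeight, numOddParts]

lemma symplecticSum_zero_succ (t x : K) (n : ℕ) : symplecticSum t x 0 (n + 1) = 0 :=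
  sum_eq_zero fun μ hμ ↦ absurd (mem_filter.1 hμ).2 (card_parts_ne_zero μ)

lemma orthogonalSum_zero_succ (t x : K) (n : ℕ) : orthogonalSum t x 0 (n + 1) = 0 :=
  sum_eq_zero fun μ hμ ↦ absurd (mem_filter.1 hμ).2 (card_parts_ne_zero μ)

lemma symplecticSum_two_mul_add_one (ht : t ≠ 0) (x : K) (n N : ℕ) :
    symplecticSum t x (2 * n + 1) (N + (2 * n + 1)) = t ^ ((2 * n + 1) * (2 * n + 2)) *
      ∑ p ∈ antidiagonal n, orthogonalSum t x (2 * p.1 + 1) N / qPochhammer x x p.2 := by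
  rw [symplecticSum_add ht, sum_antidiagonal_two_mul_add_one
    fun i j ↦ if Even j then orthogonalSum t x i N / qPochhammer x x (j / 2) else 0]
  simp

lemma symplecticSum_two_mul_add_two (ht : t ≠ 0) (x : K) (n N : ℕ) :
    symplecticSum t x (2 * n + 2) (N + (2 * n + 2)) = t ^ ((2 * n + 2) * (2 * n + 3)) *
      (orthogonalSum t x 0 N / qPochhammer x x (n + 1) +
        ∑ p ∈ antidiagonal n, orthogonalSum t x (2 * p.1 + 2) N / qPochhammer x x p.2) := by
  rw [symplecticSum_add ht, sum_antidiagonal_two_mul_add_two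
    fun i j ↦ if Even j then orthogonalSum t x i N / qPochhammer x x (j / 2) else 0]
  simp [Nat.even_add_one]

lemma orthogonalSum_two_mul_add_one (ht : t ≠ 0) (x : K) (n N : ℕ) :
    orthogonalSum t x (2 * n + 1) (N + (2 * n + 1)) = t ^ ((2 * n + 1) * (2 * n)) *
      ∑ p ∈ antidiagonal n, (symplecticSum t x (2 * p.1) N + symplecticSum t x (2 * p.1 + 1) N) /
        qPochhammer x x p.2 := by
  rw [orthogonalSum_add ht, sum_antidiagonal_two_mul_add_one
    fun i j ↦ symplecticSum t x i N / qPochhammer x x (j / 2)]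
  simp [add_div, Nat.mul_add_div]

lemma orthogonalSum_two_mul_add_two (ht : t ≠ 0) (x : K) (n N : ℕ) :
    orthogonalSum t x (2 * n + 2) (N + (2 * n + 2)) = t ^ ((2 * n + 2) * (2 * n + 1)) *
      (symplecticSum t x 0 N / qPochhammer x x (n + 1) + ∑ p ∈ antidiagonal n,
        (symplecticSum t x (2 * p.1 + 1) N + symplecticSum t x (2 * p.1 + 2) N) /
          qPochhammer x x p.2) := by
  rw [orthogonalSum_add ht, sum_antidiagonal_two_mul_add_two
    fun i j ↦ symplecticSum t x i N / qPochhammer x x (j / 2)]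
  simp [add_div, Nat.mul_add_div]

/-- The closed forms of the symplectic sums over the partitions of `2 * m + 2`, isolated as a
predicate because they are proved by strong induction on `m`. -/
def SymplecticClosedForm (t x : K) (m : ℕ) : Prop :=
  ∀ n, symplecticSum t x (2 * n + 1) (2 * m + 2) =
      t ^ (2 * m + 2) * (x ^ (n ^ 2 + n) * gaussBinom x m n / qPochhammer x x n) ∧
    symplecticSum t x (2 * n + 2) (2 * m + 2) =
      t ^ (2 * m + 2) * (x ^ (n + 1) ^ 2 * gaussBinom x m n / qPochhammer x x (n + 1))

lemma symplecticSum_even_add_odd {L : ℕ} (h : ∀ l < L, SymplecticClosedForm t x l) (i : ℕ) :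
    symplecticSum t x (2 * i) (2 * L) + symplecticSum t x (2 * i + 1) (2 * L) =
      t ^ (2 * L) * (x ^ i ^ 2 * gaussBinom x L i / qPochhammer x x i) := by
  rcases L with _ | L
  · rcases i with _ | i
    · simp [symplecticSum_zero_zero, symplecticSum_eq_zero_of_lt]
    · simp [symplecticSum_eq_zero_of_lt]
  · rcases i with _ | i
    · rw [Nat.mul_zero, Nat.mul_succ, symplecticSum_zero_succ, (h L L.lt_succ_self 0).1]
      simp
    · rw [Nat.mul_succ, Nat.mul_succ, (h L L.lt_succ_self i).2, ← Nat.mul_succ 2 i,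
        (h L L.lt_succ_self (i + 1)).1, gaussBinom_succ_succ]
      ring

lemma symplecticSum_odd_add_even (hx : ∀ n, qPochhammer x x n ≠ 0) {L : ℕ}
    (h : SymplecticClosedForm t x L) (i : ℕ) :
    symplecticSum t x (2 * i + 1) (2 * L + 2) + symplecticSum t x (2 * i + 2) (2 * L + 2) =
      t ^ (2 * L + 2) * (x ^ (i * (i + 1)) * gaussBinom x L i / qPochhammer x x (i + 1)) := by
  have hi := hx i
  have hi' := hx (i + 1)
  rw [(h i).1, (h i).2]
  rw [qPochhammer_self_succ] at hi' ⊢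
  have := right_ne_zero_of_mul hi'
  field_simp
  ring

lemma orthogonalSum_odd_eq (hx : ∀ n, qPochhammer x x n ≠ 0) (ht : t ≠ 0) (hxt : x = t ^ 4)
    {m : ℕ} (h : ∀ l < m, SymplecticClosedForm t x l) (n : ℕ) :
    orthogonalSum t x (2 * n + 1) (2 * m + 1) =
      t ^ (2 * m) * (x ^ n ^ 2 * gaussBinom x m n / qPochhammer x x n) := by
  rcases lt_or_ge m n with hmn | hmn
  · rw [orthogonalSum_eq_zero_of_lt t x (by lia), gaussBinom_eq_zero_of_lt x hmn]
    simp
  obtain ⟨L, rfl⟩ := Nat.exists_eq_add_of_le hmn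
  have vandermonde := sum_gaussBinom_div_qPochhammer hx 0 L n
  simp only [add_zero, ← sq] at vandermonde
  rw [show 2 * (n + L) + 1 = 2 * L + (2 * n + 1) by ring, orthogonalSum_two_mul_add_one ht]
  simp only [symplecticSum_even_add_odd fun l (hl : l < L) ↦ h l (by lia),
    mul_div_assoc (t ^ (2 * L)), ← mul_sum, vandermonde]
  rw [hxt]
  ring

lemma orthogonalSum_even_eq (hx : ∀ n, qPochhammer x x n ≠ 0) (ht : t ≠ 0) (hxt : x = t ^ 4)
    {m : ℕ} (h : ∀ l < m, SymplecticClosedForm t x l) (n : ℕ) :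
    orthogonalSum t x (2 * n + 2) (2 * m + 2) =
      t ^ (2 * m + 2) * (x ^ (n * (n + 1)) * gaussBinom x m n / qPochhammer x x (n + 1)) := by
  rcases lt_trichotomy m n with hmn | rfl | hmn
  · rw [orthogonalSum_eq_zero_of_lt t x (by lia), gaussBinom_eq_zero_of_lt x hmn]
    simp
  · have first := orthogonalSum_two_mul_add_two ht x m 0
    rw [zero_add] at first
    rw [first, sum_eq_zero fun p _ ↦ by simp [symplecticSum_eq_zero_of_lt], symplecticSum_zero_zero,
      gaussBinom_self, hxt]
    ring
  obtain ⟨L, rfl⟩ := Nat.exists_eq_add_of_lt hmn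
  rw [show 2 * (n + L + 1) + 2 = 2 * L + 2 + (2 * n + 2) by ring, orthogonalSum_two_mul_add_two ht]
  simp only [symplecticSum_zero_succ, symplecticSum_odd_add_even hx (h L (by lia)), zero_div,
    zero_add, mul_div_assoc (t ^ (2 * L + 2)), ← mul_sum, sum_gaussBinom_div_qPochhammer hx 1 L n,
    add_right_comm n 1 L]
  rw [hxt]
  ring

lemma symplecticSum_odd_eq (hx : ∀ n, qPochhammer x x n ≠ 0) (ht : t ≠ 0) (hxt : x = t ^ 4)
    {m : ℕ} (h : ∀ l < m, SymplecticClosedForm t x l) (n : ℕ) :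
    symplecticSum t x (2 * n + 1) (2 * m + 2) =
      t ^ (2 * m + 2) * (x ^ (n ^ 2 + n) * gaussBinom x m n / qPochhammer x x n) := by
  rcases lt_or_ge m n with hmn | hmn
  · rw [symplecticSum_eq_zero_of_lt t x (by lia), gaussBinom_eq_zero_of_lt x hmn]
    simp
  obtain ⟨L, rfl⟩ := Nat.exists_eq_add_of_le hmn
  have vandermonde := sum_gaussBinom_div_qPochhammer hx 0 L n
  simp only [add_zero, ← sq] at vandermonde
  rw [show 2 * (n + L) + 2 = 2 * L + 1 + (2 * n + 1) by ring, symplecticSum_two_mul_add_one ht]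
  simp only [orthogonalSum_odd_eq hx ht hxt fun l (hl : l < L) ↦ h l (by lia),
    mul_div_assoc (t ^ (2 * L)), ← mul_sum, vandermonde]
  rw [hxt]
  ring

lemma symplecticSum_even_eq (hx : ∀ n, qPochhammer x x n ≠ 0) (ht : t ≠ 0) (hxt : x = t ^ 4)
    {m : ℕ} (h : ∀ l < m, SymplecticClosedForm t x l) (n : ℕ) :
    symplecticSum t x (2 * n + 2) (2 * m + 2) =
      t ^ (2 * m + 2) * (x ^ (n + 1) ^ 2 * gaussBinom x m n / qPochhammer x x (n + 1)) := by
  rcases lt_trichotomy m n with hmn | rfl | hmn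
  · rw [symplecticSum_eq_zero_of_lt t x (by lia), gaussBinom_eq_zero_of_lt x hmn]
    simp
  · have first := symplecticSum_two_mul_add_two ht x m 0
    rw [zero_add] at first
    rw [first, sum_eq_zero fun p _ ↦ by simp [orthogonalSum_eq_zero_of_lt], orthogonalSum_zero_zero,
      gaussBinom_self, hxt]
    ring
  obtain ⟨L, rfl⟩ := Nat.exists_eq_add_of_lt hmn
  rw [show 2 * (n + L + 1) + 2 = 2 * L + 2 + (2 * n + 2) by ring, symplecticSum_two_mul_add_two ht]
  simp only [orthogonalSum_zero_succ,
    orthogonalSum_even_eq hx ht hxt fun l (hl : l < L) ↦ h l (by lia), zero_div,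
    zero_add, mul_div_assoc (t ^ (2 * L + 2)), ← mul_sum, sum_gaussBinom_div_qPochhammer hx 1 L n,
    add_right_comm n 1 L]
  rw [hxt]
  ring

theorem symplecticClosedForm (hx : ∀ n, qPochhammer x x n ≠ 0) (ht : t ≠ 0) (hxt : x = t ^ 4)
    (m : ℕ) : SymplecticClosedForm t x m := by
  induction m using Nat.strong_induction_on with
  | _ m ih => exact fun n ↦
      ⟨symplecticSum_odd_eq hx ht hxt ih n, symplecticSum_even_eq hx ht hxt ih n⟩

end ClosedForm

section WeightedSum

variable {K : Type*} [Field K] {t x : K}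

lemma sum_mul_symplecticWeight (g : ℕ → K) (t x : K) (n : ℕ) :
    ∑ μ : n.Partition, g μ.parts.card * symplecticWeight t x μ =
      ∑ p ∈ antidiagonal n, g p.1 * symplecticSum t x p.1 n := by
  rw [sum_antidiagonal_eq_sum_range_succ fun k _ ↦ g k * symplecticSum t x k n,
    ← sum_fiberwise_of_maps_to fun μ _ ↦ mem_range_succ_iff.2 (card_parts_le μ)]
  refine sum_congr rfl fun k _ ↦ ?_
  rw [symplecticSum, mul_sum]
  exact sum_congr rfl fun μ hμ ↦ by rw [(mem_filter.1 hμ).2]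

lemma one_sub_mul_symplecticSum_add (hx : ∀ n, qPochhammer x x n ≠ 0) (ht : t ≠ 0)
    (hxt : x = t ^ 4) (m n : ℕ) :
    (1 - t ^ (2 * (2 * n + 1))) * symplecticSum t x (2 * n + 1) (2 * m + 2) +
        (1 - t ^ (2 * (2 * n + 2))) * symplecticSum t x (2 * n + 2) (2 * m + 2) =
      t ^ (2 * m + 2) * (x ^ n ^ 2 * x ^ n * gaussBinom x m n / qPochhammer x x n -
        t ^ 2 * (1 - t ^ 2) *
          (x ^ n ^ 2 * (x ^ 2) ^ n * gaussBinom x m n / qPochhammer x x n)) := by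
  obtain ⟨odd, even⟩ := symplecticClosedForm hx ht hxt m n
  have hn := hx (n + 1)
  rw [qPochhammer_self_succ] at hn even
  have := left_ne_zero_of_mul hn
  have := right_ne_zero_of_mul hn
  have odd_pow : t ^ (2 * (2 * n + 1)) = t ^ 2 * x ^ n := by rw [hxt]; ring
  have even_pow : t ^ (2 * (2 * n + 2)) = x ^ (n + 1) := by rw [hxt]; ring
  have base : t ^ 2 * (1 - t ^ 2) = t ^ 2 - x := by rw [hxt]; ring
  rw [odd, even, odd_pow, even_pow, base]
  field_simp
  ring

lemma qPochhammer_self_sub_eq (hx : ∀ n, qPochhammer x x n ≠ 0) (hxt : x = t ^ 4) (s : ℕ) :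
    qPochhammer x x s - t ^ 2 * (1 - t ^ 2) * qPochhammer (x ^ 2) x s =
      qPochhammer x x s * ((1 + t ^ 2 * x ^ (s + 1)) / (1 + t ^ 2)) := by
  have shift : (1 - x) * qPochhammer (x ^ 2) x s = qPochhammer x x s * (1 - x ^ (s + 1)) := by
    rw [sq, ← qPochhammer_succ', qPochhammer_self_succ]
  have factor : 1 - x = (1 - t ^ 2) * (1 + t ^ 2) := by rw [hxt]; ring
  have hne : (1 - t ^ 2) * (1 + t ^ 2) ≠ 0 := by simpa [qPochhammer, factor] using hx 1
  have := right_ne_zero_of_mul hne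
  rw [factor] at shift
  field_simp
  linear_combination -t ^ 2 * shift

theorem sum_one_sub_mul_symplecticWeight (hx : ∀ n, qPochhammer x x n ≠ 0) (ht : t ≠ 0)
    (hxt : x = t ^ 4) (m : ℕ) :
    ∑ μ : (2 * m + 2).Partition, (1 - t ^ (2 * μ.parts.card)) * symplecticWeight t x μ =
      t ^ (2 * m + 2) / (1 + t ^ 2) * ∑ p ∈ antidiagonal m,
        (-1) ^ p.1 * x ^ (p.1 + 1).choose 2 * (1 + t ^ 2 * x ^ (p.1 + 1)) /
          qPochhammer x x p.2 := by
  rw [sum_mul_symplecticWeight fun k ↦ 1 - t ^ (2 * k),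
    sum_antidiagonal_two_mul_add_two
      fun k _ ↦ (1 - t ^ (2 * k)) * symplecticSum t x k (2 * m + 2)]
  simp only [one_sub_mul_symplecticSum_add hx ht hxt]
  rw [← mul_sum, sum_sub_distrib, ← mul_sum, sum_gaussBinom_eq_sum_qPochhammer hx,
    sum_gaussBinom_eq_sum_qPochhammer hx, mul_sum, ← sum_sub_distrib, mul_zero, pow_zero, sub_self,
    zero_mul, zero_add, div_mul_eq_mul_div, mul_div_assoc, sum_div]
  refine congrArg _ (sum_congr rfl fun p _ ↦ ?_)
  have := hx p.1
  have := hx p.2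
  linear_combination (norm := (field_simp; try ring)) (-1) ^ p.1 * x ^ (p.1 + 1).choose 2 /
    (qPochhammer x x p.1 * qPochhammer x x p.2) * qPochhammer_self_sub_eq hx hxt p.1

end WeightedSum

section Real

open Real

lemma qPochhammer_self_ne_zero {K : Type*} [Field K] [LinearOrder K] [IsStrictOrderedRing K]
    {x : K} (hx : 0 ≤ x) (hx1 : x ≠ 1) (n : ℕ) : qPochhammer x x n ≠ 0 :=
  prod_ne_zero_iff.2 fun j _ ↦ by
    rwa [← pow_succ', sub_ne_zero, ne_comm, ne_eq, pow_eq_one_iff_of_nonneg hx j.succ_ne_zero]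

variable {q : ℝ}

lemma rpow_natCast_div_two (hq : 0 ≤ q) (k : ℕ) : q ^ ((k : ℝ) / 2) = √q ^ k := by
  rw [sqrt_eq_rpow, ← rpow_mul_natCast hq, one_div_mul_eq_div]

open Classical in
lemma ite_colLen_eq_mul_symplecticWeight (hq : 0 ≤ q) {n : ℕ} (μ : n.Partition) :
    (if ∀ i, Odd i → Even (μ.parts.count i) then
        (1 - q ^ (-(colLen μ 1 : ℝ))) /
          (q ^ ((((∑ i ∈ Icc 1 n, ((colLen μ i : ℝ)) ^ 2)) + (numOddParts μ : ℝ)) / 2)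
            * ∏ i ∈ Icc 1 n, qPoch (q ^ (-2 : ℤ)) (q ^ (-2 : ℤ)) (μ.parts.count i / 2))
      else 0) =
      (1 - (√q)⁻¹ ^ (2 * μ.parts.card)) * symplecticWeight (√q)⁻¹ (q ^ (-2 : ℤ)) μ := by
  have column : q ^ (-(colLen μ 1 : ℝ)) = (√q)⁻¹ ^ (2 * μ.parts.card) := by
    rw [colLen_one, rpow_neg hq, rpow_natCast, inv_pow, pow_mul, sq_sqrt hq]
  have exponent : q ^ (((∑ i ∈ Icc 1 n, (colLen μ i : ℝ) ^ 2) + (numOddParts μ : ℝ)) / 2) =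
      √q ^ (∑ i ∈ Icc 1 n, colLen μ i ^ 2) * √q ^ numOddParts μ := by
    rw [← pow_add, ← rpow_natCast_div_two hq]
    push_cast
    rfl
  rw [column, exponent, symplecticWeight, mul_ite, mul_zero,
    inv_pow _ (∑ i ∈ _, _), inv_pow _ (numOddParts μ), ← mul_inv, inv_div_left,
    mul_comm (∏ i ∈ _, _), div_eq_mul_inv]
  rfl

lemma neg_one_pow_mul_div_eq (hq : q ≠ 0) (s : ℕ) (P : ℝ) :
    (-1) ^ s * (q ^ (2 * (s + 1) + 1) + 1) / (q ^ ((s + 1) * (s + 1 + 1)) * P) =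
      q * ((-1) ^ s * (q ^ (-2 : ℤ)) ^ (s + 1).choose 2 *
        (1 + q⁻¹ * (q ^ (-2 : ℤ)) ^ (s + 1)) / P) := by
  have triangular : (q ^ 2) ^ (s + 1).choose 2 = q ^ (s * (s + 1)) := by
    rw [← pow_mul, Nat.choose_two_right, Nat.mul_div_cancel' (Nat.even_mul_pred_self _).two_dvd,
      Nat.add_sub_cancel, mul_comm]
  have base : q ^ (-2 : ℤ) = (q ^ 2)⁻¹ := rfl
  rw [base, inv_pow, inv_pow, triangular]
  field_simp
  ring

lemma sum_Icc_eq_mul_sum_antidiagonal (hq : q ≠ 0) (m : ℕ) :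
    ∑ i ∈ Icc 1 (m + 1), (-1 : ℝ) ^ (i - 1) * (q ^ (2 * i + 1) + 1) /
        (q ^ (i * (i + 1)) * qPoch (q ^ (-2 : ℤ)) (q ^ (-2 : ℤ)) (m + 1 - i)) =
      q * ∑ p ∈ antidiagonal m, (-1) ^ p.1 * (q ^ (-2 : ℤ)) ^ (p.1 + 1).choose 2 *
        (1 + q⁻¹ * (q ^ (-2 : ℤ)) ^ (p.1 + 1)) /
          qPochhammer (q ^ (-2 : ℤ)) (q ^ (-2 : ℤ)) p.2 := by
  rw [mul_sum, ← Ico_add_one_right_eq_Icc, sum_Ico_eq_sum_range, Nat.add_sub_cancel,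
    Nat.sum_antidiagonal_eq_sum_range_succ_mk]
  refine sum_congr rfl fun s _ ↦ ?_
  rw [add_comm 1 s, Nat.add_sub_cancel, Nat.add_sub_add_right]
  exact neg_one_pow_mul_div_eq hq s _

open Classical in
theorem anzanello_first_conjecture_general (q : ℝ) (hq : 0 < q) (hq1 : q ≠ 1) (m : ℕ) :
    (∑ lam : Nat.Partition (2 * m),
      if ∀ i, Odd i → Even (lam.parts.count i) then
        (1 - q ^ (-(colLen lam 1 : ℝ))) /
          (q ^ ((((∑ i ∈ Icc 1 (2 * m), ((colLen lam i : ℝ)) ^ 2))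
                + (numOddParts lam : ℝ)) / 2)
            * ∏ i ∈ Icc 1 (2 * m),
                qPoch (q ^ (-2 : ℤ)) (q ^ (-2 : ℤ)) (lam.parts.count i / 2))
      else 0)
    = 1 / (q ^ m * (q + 1)) * ∑ i ∈ Icc 1 m,
        (-1 : ℝ) ^ (i - 1) * (q ^ (2 * i + 1) + 1)
          / (q ^ (i * (i + 1)) * qPoch (q ^ (-2 : ℤ)) (q ^ (-2 : ℤ)) (m - i)) := by
  simp only [ite_colLen_eq_mul_symplecticWeight hq.le]
  rcases m with _ | m
  · simp
  have base : q ^ (-2 : ℤ) = (√q)⁻¹ ^ 4 := by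
    rw [inv_pow, pow_mul (√q) 2 2, sq_sqrt hq.le]
    rfl
  have base_ne_one : q ^ (-2 : ℤ) ≠ 1 :=
    mt (zpow_eq_one_iff_right₀ hq.le hq1).1 (by decide)
  have sqrt_inv_sq : (√q)⁻¹ ^ 2 = q⁻¹ := by rw [inv_pow, sq_sqrt hq.le]
  have factor : q⁻¹ ^ (m + 1) / (1 + q⁻¹) = 1 / (q ^ (m + 1) * (q + 1)) * q := by
    rw [inv_pow]
    field_simp
  rw [mul_add, sum_one_sub_mul_symplecticWeight
    (qPochhammer_self_ne_zero (zpow_nonneg hq.le _) base_ne_one) (by positivity) base,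
    sum_Icc_eq_mul_sum_antidiagonal hq.ne', ← Nat.mul_succ, pow_mul, sqrt_inv_sq, factor, mul_assoc]

end Real

open Classical in
/-- Anzanello's first conjecture. -/
theorem anzanello_first_conjecture (q : ℝ) (hq : 1 < q) (m : ℕ) (hm : 1 ≤ m) :
    (∑ lam : Nat.Partition (2 * m),
      if ∀ i, Odd i → Even (lam.parts.count i) then
        (1 - q ^ (-(colLen lam 1 : ℝ))) /
          (q ^ ((((∑ i ∈ Finset.Icc 1 (2 * m), ((colLen lam i : ℝ)) ^ 2))
                + (numOddParts lam : ℝ)) / 2)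
            * ∏ i ∈ Finset.Icc 1 (2 * m),
                qPoch (q ^ (-2 : ℤ)) (q ^ (-2 : ℤ)) (lam.parts.count i / 2))
      else 0)
    = 1 / (q ^ m * (q + 1)) * ∑ i ∈ Finset.Icc 1 m,
        (-1 : ℝ) ^ (i - 1) * (q ^ (2 * i + 1) + 1)
          / (q ^ (i * (i + 1)) * qPoch (q ^ (-2 : ℤ)) (q ^ (-2 : ℤ)) (m - i)) :=
  anzanello_first_conjecture_general q (zero_lt_one.trans hq) hq.ne' m
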